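/- arXiv:2207.02040 — 3 statements merged into one kernel-verified Lean document; each statement's English description precedes it below -/
import Mathlib

section
/- Let n ≥ 3, let S be a nonempty set of pairwise non-crossing chords of the standard n-cycle, and suppose the chord graph of S contains k ≥ 1 pairwise vertex-disjoint cycles, of lengths i_1, …, i_k (each i_j ≥ 3). Then the number of vertices of ZMod n that are chord-free for S is at least 2 + Σ_{j=1}^{k} (i_j − 2). (This is a block-free rendition of the paper's Lemma 2, which states that the number a of degree-three vertices of a radius-1 3-polytope satisfies a ≥ 2 + Σ_{i≥3} (i−2)·B_G(i), where B_G(i) is the number of blocks of the chord graph bounded by an i-cycle.) -/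
/-- The vertices strictly between `a` and `b`, traversing the cycle `ZMod n`
from `a` towards `b` in the direction of increasing residues. -/
def Between (n : ℕ) (a b v : ZMod n) : Prop :=
  0 < (v - a).val ∧ (v - a).val < (b - a).val

/-- `e` is an edge of the standard `n`-cycle on `ZMod n`. -/
def IsCycleEdge (n : ℕ) (e : Sym2 (ZMod n)) : Prop :=
  ∃ i : ZMod n, e = s(i, i + 1)

/-- A chord: an unordered pair of distinct vertices of `ZMod n` that is not an
edge of the standard `n`-cycle. -/
def IsChord (n : ℕ) (e : Sym2 (ZMod n)) : Prop :=
  ¬ e.IsDiag ∧ ¬ IsCycleEdge n e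

/-- Two chords cross if exactly one endpoint of the second lies strictly between
the endpoints of the first (traversing in the direction of increasing residues). -/
def Cross (n : ℕ) (e f : Sym2 (ZMod n)) : Prop :=
  ∀ a b c d : ZMod n, e = s(a, b) → f = s(c, d) →
    Xor' (Between n a b c) (Between n a b d)

/-- `S` is a set of pairwise non-crossing chords of the standard `n`-cycle. -/
def NonCrossingChords (n : ℕ) (S : Set (Sym2 (ZMod n))) : Prop :=
  (∀ e ∈ S, IsChord n e) ∧ ∀ e ∈ S, ∀ f ∈ S, e ≠ f → ¬ Cross n e f

/-- The chord graph of a set `S` of chords: the simple graph on `ZMod n`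
whose edge set is `S`. -/
def chordGraph (n : ℕ) (S : Set (Sym2 (ZMod n))) : SimpleGraph (ZMod n) :=
  SimpleGraph.fromEdgeSet S

/-- A vertex is chord-free for `S` if it is incident to no chord of `S`. -/
def ChordFree (n : ℕ) (S : Set (Sym2 (ZMod n))) (v : ZMod n) : Prop :=
  ∀ e ∈ S, v ∉ e

/-- An outerplane graph on `n` vertices: a simple graph on `ZMod n` whose edge
set is the (disjoint) union of the standard `n`-cycle and a set of pairwise
non-crossing chords. -/
def IsOuterplane (n : ℕ) (G : SimpleGraph (ZMod n)) : Prop :=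
  ∃ S : Set (Sym2 (ZMod n)), NonCrossingChords n S ∧
    G.edgeSet = {e | IsCycleEdge n e} ∪ S

/-- The multiset of vertex degrees of a graph on a finite vertex type. -/
noncomputable def degMultiset {V : Type*} [Fintype V] (G : SimpleGraph V) : Multiset ℕ := by
  classical exact Finset.univ.val.map fun v => G.degree v

/-- The multiset of vertex degrees of a graph on `ZMod n` (junk value for `n = 0`). -/
noncomputable def degreeMultiset (n : ℕ) (G : SimpleGraph (ZMod n)) : Multiset ℕ :=
  if h : n = 0 then 0
  else by haveI : NeZero n := ⟨h⟩; exact degMultiset G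

/-- `M` is outerplane-unigraphic on `n` vertices: there is an outerplane graph on
`n` vertices with degree multiset `M`, and any two such are isomorphic. -/
def OuterplaneUnigraphic (n : ℕ) (M : Multiset ℕ) : Prop :=
  (∃ G : SimpleGraph (ZMod n), IsOuterplane n G ∧ degreeMultiset n G = M) ∧
  ∀ G G' : SimpleGraph (ZMod n), IsOuterplane n G → IsOuterplane n G' →
    degreeMultiset n G = M → degreeMultiset n G' = M → Nonempty (G ≃g G')

/-- A caterpillar: a connected acyclic graph (tree) in which all vertices of
degree at least two lie on a common path. -/
def IsCaterpillar {V : Type*} (G : SimpleGraph V) : Prop :=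
  G.Connected ∧ G.IsAcyclic ∧
    ∃ (u w : V) (p : G.Walk u w), p.IsPath ∧
      ∀ v : V, (∃ a b : V, a ≠ b ∧ G.Adj v a ∧ G.Adj v b) → v ∈ p.support

/-!
Every vertex of a cycle of the chord graph is joined by a chord to its predecessor along the circle:
the cycle with that vertex removed is a path, and a path cannot leave the side of a chord on which
it starts. So a cycle of length `i` cuts the circle into `i` arcs, each cut off by a chord, and each
arc cut off by a chord contains a chord-free vertex.

Cut the circle open into a line. Two cycles sharing at most one vertex have nested or essentially
disjoint spans, so some cycle has no other cycle inside its span. Its `i - 1` inner arcs contain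
distinct chord-free vertices; deleting that cycle and all but one of those vertices leaves a
configuration in which the remaining cycles still see a vertex in each of their arcs. Each deletion
costs at least `i - 2` vertices, and two vertices are left at the end.
-/

section Gaps

variable {α ι : Type*} [LinearOrder α]

/-- `F` meets every arc into which the points of `C` divide the circle obtained from the line `α` by
joining its two ends: the intervals between consecutive points of `C`, and the outer arc made of the
points below all of `C` together with those above all of `C`. -/
structure MeetsGaps (F C : Finset α) : Prop where
  inner : ∀ p ∈ C, ∀ q ∈ C, p < q → (∀ x ∈ C, x ∉ Set.Ioo p q) → ∃ f ∈ F, p < f ∧ f < q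
  outer : ∃ f ∈ F, (∀ x ∈ C, f < x) ∨ ∀ x ∈ C, x < f

namespace MeetsGaps

variable {F C : Finset α} {a b f : α}

theorem card_le_card_filter_add_one (h : MeetsGaps F C) (ha : IsLeast (C : Set α) a)
    (hb : IsGreatest (C : Set α) b) : C.card ≤ (F.filter (· ∈ Set.Ioo a b)).card + 1 := by
  refine Finset.card_le_of_interleaved fun p hp q hq hpq hcons => ?_
  obtain ⟨f, hf, hpf, hfq⟩ := h.inner p hp q hq hpq hcons
  have hfab : f ∈ Set.Ioo a b := ⟨(ha.2 hp).trans_lt hpf, hfq.trans_le (hb.2 hq)⟩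
  exact ⟨f, Finset.mem_filter.2 ⟨hf, hfab⟩, hpf, hfq⟩

theorem insert_filter_notMem_Ioo (h : MeetsGaps F C) (hC : ∀ x ∈ C, x ∉ Set.Ioo a b)
    (hf : f ∈ Set.Ioo a b) : MeetsGaps (insert f (F.filter (· ∉ Set.Ioo a b))) C := by
  have replace_mem : ∀ g ∈ F, ∃ g' ∈ insert f (F.filter (· ∉ Set.Ioo a b)),
      ∀ x ∈ C, (x < g ↔ x < g') ∧ (g < x ↔ g' < x) := by
    intro g hg
    by_cases hgab : g ∈ Set.Ioo a b
    · refine ⟨f, Finset.mem_insert_self _ _, fun x hx => ?_⟩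
      grind
    · have hg' : g ∈ F.filter (· ∉ Set.Ioo a b) := Finset.mem_filter.2 ⟨hg, hgab⟩
      exact ⟨g, Finset.mem_insert_of_mem hg', fun x _ => ⟨Iff.rfl, Iff.rfl⟩⟩
  constructor
  · intro p hp q hq hpq hcons
    obtain ⟨g, hg, hpg, hgq⟩ := h.inner p hp q hq hpq hcons
    obtain ⟨g', hg', hside⟩ := replace_mem g hg
    exact ⟨g', hg', (hside p hp).1.1 hpg, (hside q hq).2.1 hgq⟩
  · obtain ⟨g, hg, hout⟩ := h.outer
    obtain ⟨g', hg', hside⟩ := replace_mem g hg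
    exact ⟨g', hg', hout.imp (fun hlt x hx => (hside x hx).2.1 (hlt x hx))
      fun hlt x hx => (hside x hx).1.1 (hlt x hx)⟩

theorem two_le_card_insert_filter (h : MeetsGaps F C) (ha : a ∈ C) (hb : b ∈ C)
    (hf : f ∈ Set.Ioo a b) : 2 ≤ (insert f (F.filter (· ∉ Set.Ioo a b))).card := by
  obtain ⟨g, hg, hout⟩ := h.outer
  have hgab : g ∉ Set.Ioo a b := fun hgab => hout.elim
    (fun hlt => (hlt a ha).not_gt hgab.1) fun hlt => (hlt b hb).not_gt hgab.2
  exact Finset.one_lt_card.2 ⟨f, Finset.mem_insert_self _ _, g,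
    Finset.mem_insert_of_mem (Finset.mem_filter.2 ⟨hg, hgab⟩), ne_of_mem_of_not_mem hf hgab⟩

theorem exists_card_add_card_sub_two_le (h : MeetsGaps F C) (ha : IsLeast (C : Set α) a)
    (hb : IsGreatest (C : Set α) b) (hab : a < b) :
    ∃ f ∈ Set.Ioo a b,
      (insert f (F.filter (· ∉ Set.Ioo a b))).card + (C.card - 2) ≤ F.card := by
  have hC : 2 ≤ C.card := Finset.one_lt_card.2 ⟨a, ha.1, b, hb.1, hab.ne⟩
  have hle := h.card_le_card_filter_add_one ha hb
  obtain ⟨f, hf⟩ : (F.filter (· ∈ Set.Ioo a b)).Nonempty := Finset.card_pos.1 (by omega)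
  refine ⟨f, (Finset.mem_filter.1 hf).2, ?_⟩
  have hinsert := Finset.card_insert_le f (F.filter (· ∉ Set.Ioo a b))
  have hsplit := Finset.card_filter_add_card_filter_not (s := F) (· ∈ Set.Ioo a b)
  omega

theorem two_add_sum_card_sub_two_le {J : Finset ι} {C : ι → Finset α} {a b : ι → α}
    (h : ∀ j ∈ J, MeetsGaps F (C j)) (hF : 2 ≤ F.card)
    (ha : ∀ j ∈ J, IsLeast (C j : Set α) (a j)) (hb : ∀ j ∈ J, IsGreatest (C j : Set α) (b j))
    (hab : ∀ j ∈ J, a j < b j)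
    (hspan : ∀ j ∈ J, ∀ j' ∈ J, j ≠ j' →
      Set.Icc (a j) (b j) ⊂ Set.Icc (a j') (b j') ∨ ∀ x ∈ C j, x ∉ Set.Ioo (a j') (b j')) :
    2 + ∑ j ∈ J, ((C j).card - 2) ≤ F.card := by
  classical
  induction J using Finset.strongInduction generalizing F with
  | H J ih =>
    obtain rfl | hJ := J.eq_empty_or_nonempty
    · simpa using hF
    obtain ⟨j₀, hj₀, hmin⟩ := J.exists_minimalFor (fun j => Set.Icc (a j) (b j)) hJ
    have houtside : ∀ j ∈ J.erase j₀, ∀ x ∈ C j, x ∉ Set.Ioo (a j₀) (b j₀) := fun j hj =>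
      have hjJ := Finset.mem_of_mem_erase hj
      (hspan j hjJ j₀ hj₀ (Finset.ne_of_mem_erase hj)).resolve_left
        fun hlt => hlt.not_subset (hmin hjJ hlt.subset)
    obtain ⟨f, hf, hcard⟩ :=
      (h j₀ hj₀).exists_card_add_card_sub_two_le (ha j₀ hj₀) (hb j₀ hj₀) (hab j₀ hj₀)
    have hrest := ih (J.erase j₀) (Finset.erase_ssubset hj₀)
      (F := insert f (F.filter (· ∉ Set.Ioo (a j₀) (b j₀))))
      (fun j hj => (h j (Finset.mem_of_mem_erase hj)).insert_filter_notMem_Ioo (houtside j hj) hf)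
      ((h j₀ hj₀).two_le_card_insert_filter (ha j₀ hj₀).1 (hb j₀ hj₀).1 hf)
      (fun j hj => ha j (Finset.mem_of_mem_erase hj))
      (fun j hj => hb j (Finset.mem_of_mem_erase hj))
      (fun j hj => hab j (Finset.mem_of_mem_erase hj))
      (fun j hj j' hj' => hspan j (Finset.mem_of_mem_erase hj) j' (Finset.mem_of_mem_erase hj'))
    have hsum := Finset.add_sum_erase J (fun j => (C j).card - 2) hj₀
    omega

end MeetsGaps

end Gaps

section Cycles

open SimpleGraph

variable {V : Type*} {G : SimpleGraph V} {v : V} {c : G.Walk v v}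

theorem card_toFinset_support_of_isCycle [DecidableEq V] (hc : c.IsCycle) :
    c.support.toFinset.card = c.length := by
  have htail : c.support.toFinset = c.support.tail.toFinset := by
    rw [← c.cons_tail_support, List.toFinset_cons, List.tail_cons, Finset.insert_eq_self,
      List.mem_toFinset]
    exact Walk.end_mem_tail_support hc.not_nil
  rw [htail, List.toFinset_card_of_nodup hc.support_nodup, List.length_tail, Walk.length_support,
    Nat.add_sub_cancel]

theorem exists_isPath_of_isCycle (hc : c.IsCycle) {p : V} (hp : p ∈ c.support) :
    ∃ (x y : V) (q : G.Walk x y), q.IsPath ∧ x ≠ y ∧ G.Adj p x ∧ G.Adj p y ∧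
      p ∉ q.support ∧ ∀ z, z ∈ c.support ↔ z = p ∨ z ∈ q.support := by
  classical
  have hr := hc.rotate hp
  have hmem : ∀ z, z ∈ c.support ↔ z ∈ (c.rotate p hp).support := fun z =>
    (c.mem_support_rotate_iff p hp).symm
  generalize c.rotate p hp = r at hr hmem
  have hlength := hr.three_le_length
  have hnil : ¬ r.tail.Nil := by
    have htail := r.length_tail_add_one hr.not_nil
    rw [← Walk.length_eq_zero_iff]
    omega
  have hsupport : r.tail.support = r.tail.dropLast.support ++ [p] := by
    simp [Walk.support_dropLast hnil]
  have hnodup := hr.isPath_tail.support_nodup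
  rw [hsupport] at hnodup
  refine ⟨_, _, r.tail.dropLast, hr.isPath_tail.dropLast, ?_, r.adj_snd hr.not_nil,
    (r.tail.adj_penultimate hnil).symm, ?_, fun z => ?_⟩
  · have hpenultimate : r.tail.penultimate = r.penultimate := by
      rw [Walk.penultimate, Walk.penultimate, Walk.getVert_tail, Walk.length_tail]
      congr 1
      omega
    exact hpenultimate ▸ hr.snd_ne_penultimate
  · exact fun h => List.disjoint_of_nodup_append hnodup h (List.mem_singleton_self p)
  · rw [hmem, ← Walk.cons_support_tail hr.not_nil, hsupport]
    simp [or_comm]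

end Cycles

section Arcs

variable {n : ℕ} {a b v : ZMod n}

theorem Between.ne_left (h : Between n a b v) : v ≠ a := by
  rintro rfl
  simp [Between] at h

theorem Between.ne_right (h : Between n a b v) : v ≠ b := by
  rintro rfl
  exact h.2.false

variable [NeZero n]

theorem val_sub_cases (a b : ZMod n) :
    a.val ≤ b.val ∧ (b - a).val + a.val = b.val ∨
      b.val < a.val ∧ (b - a).val + a.val = b.val + n := by
  have hba := ZMod.val_lt (b - a)
  by_cases h : (b - a).val + a.val < n
  · have := ZMod.val_add_of_lt h
    rw [sub_add_cancel] at this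
    omega
  · have := ZMod.val_add_val_of_le (not_lt.1 h)
    rw [sub_add_cancel] at this
    omega

theorem between_iff_val :
    Between n a b v ↔ a.val < v.val ∧ v.val < b.val ∨ v.val < b.val ∧ b.val < a.val ∨
      b.val < a.val ∧ a.val < v.val := by
  have hb := val_sub_cases a b
  have hv := val_sub_cases a v
  have han := ZMod.val_lt a
  have hbn := ZMod.val_lt b
  have hvn := ZMod.val_lt v
  unfold Between
  omega

theorem between_add_one (hab : a ≠ b) (hb : b ≠ a + 1) : Between n a b (a + 1) := by
  have hval : (a + 1 - a).val = 1 := by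
    rw [add_sub_cancel_left]
    refine ZMod.val_one'' ?_
    rintro rfl
    exact hab (Subsingleton.elim a b)
  have hne_zero : (b - a).val ≠ 0 := (ZMod.val_ne_zero _).2 (sub_ne_zero.2 hab.symm)
  have hne_one : (b - a).val ≠ (a + 1 - a).val := fun h =>
    hb (sub_left_injective (ZMod.val_injective n h))
  exact ⟨by omega, by omega⟩

theorem between_swap_iff (ha : v ≠ a) (hb : v ≠ b) (hab : a ≠ b) :
    Between n b a v ↔ ¬ Between n a b v := by
  have hva := (ZMod.val_injective n).ne ha
  have hvb := (ZMod.val_injective n).ne hb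
  have habv := (ZMod.val_injective n).ne hab
  rw [between_iff_val, between_iff_val]
  omega

theorem between_of_not_between (hab : a ≠ b) (ha : v ≠ a) (hb : v ≠ b)
    (h : ¬ Between n a b v) : Between n a v b := by
  have hva := (ZMod.val_injective n).ne ha
  have hvb := (ZMod.val_injective n).ne hb
  have habv := (ZMod.val_injective n).ne hab
  rw [between_iff_val] at h ⊢
  omega

theorem between_of_between_of_between {x y f : ZMod n} (hx : Between n a y x)
    (hy : y = b ∨ Between n a b y) (hf : Between n x y f) : Between n a b f := by
  obtain rfl | hy := hy <;> simp only [between_iff_val] at * <;> omega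

theorem val_sub_lt_val_sub {x y : ZMod n} (hx : Between n a y x)
    (hy : y = b ∨ Between n a b y) : (y - x).val < (b - a).val := by
  have hxy := val_sub_cases x y
  have hab := val_sub_cases a b
  have han := ZMod.val_lt a
  have hyn := ZMod.val_lt y
  have hbn := ZMod.val_lt b
  obtain rfl | hy := hy <;> simp only [between_iff_val] at * <;> omega

end Arcs

namespace NonCrossingChords

open SimpleGraph

variable {n : ℕ} {S : Set (Sym2 (ZMod n))} {u w : ZMod n}

theorem adj_iff (hS : NonCrossingChords n S) : (chordGraph n S).Adj u w ↔ s(u, w) ∈ S := by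
  rw [chordGraph, fromEdgeSet_adj]
  exact and_iff_left_of_imp fun he h => (hS.1 _ he).1 (Sym2.mk_isDiag_iff.2 h)

theorem ne_add_one (hS : NonCrossingChords n S) (huw : (chordGraph n S).Adj u w) : w ≠ u + 1 :=
  fun h => (hS.1 _ (hS.adj_iff.1 huw)).2 ⟨u, by rw [h]⟩

theorem exists_adj_of_not_chordFree (hS : NonCrossingChords n S) (hu : ¬ ChordFree n S u) :
    ∃ y, (chordGraph n S).Adj u y := by
  unfold ChordFree at hu
  push Not at hu
  obtain ⟨e, he, hue⟩ := hu
  obtain ⟨y, rfl⟩ := Sym2.mem_iff_exists.1 hue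
  exact ⟨y, hS.adj_iff.2 he⟩

variable [NeZero n]

theorem between_iff_of_adj (hS : NonCrossingChords n S) (huw : (chordGraph n S).Adj u w)
    {x y : ZMod n} (hxy : (chordGraph n S).Adj x y) (hxu : x ≠ u) (hxw : x ≠ w) (hyu : y ≠ u)
    (hyw : y ≠ w) : Between n u w x ↔ Between n u w y := by
  have hne : s(u, w) ≠ s(x, y) := by
    rw [Ne, Sym2.eq_iff]
    grind
  by_contra hside
  refine hS.2 _ (hS.adj_iff.1 huw) _ (hS.adj_iff.1 hxy) hne fun a b c d hab hcd => ?_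
  have hx := between_swap_iff hxu hxw huw.ne
  have hy := between_swap_iff hyu hyw huw.ne
  rw [Sym2.eq_iff] at hab hcd
  refine (xor_iff_not_iff _ _).2 ?_
  rcases hab with ⟨rfl, rfl⟩ | ⟨rfl, rfl⟩ <;> rcases hcd with ⟨rfl, rfl⟩ | ⟨rfl, rfl⟩ <;> tauto

theorem between_iff_of_mem_support (hS : NonCrossingChords n S) (huw : (chordGraph n S).Adj u w)
    {x y z : ZMod n} (q : (chordGraph n S).Walk x y) (hu : u ∉ q.support) (hw : w ∉ q.support)
    (hz : z ∈ q.support) : Between n u w x ↔ Between n u w z := by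
  induction q with
  | nil => rw [Walk.mem_support_nil_iff.1 hz]
  | cons hxx' q ih =>
    rw [Walk.support_cons, List.mem_cons, not_or] at hu hw
    obtain rfl | hz := List.mem_cons.1 hz
    · rfl
    · have hx'u := ne_of_mem_of_not_mem q.start_mem_support hu.2
      have hx'w := ne_of_mem_of_not_mem q.start_mem_support hw.2
      exact (hS.between_iff_of_adj huw hxx' (Ne.symm hu.1) (Ne.symm hw.1) hx'u hx'w).trans
        (ih hu.2 hw.2 hz)

theorem exists_chordFree_between (hS : NonCrossingChords n S) (huw : (chordGraph n S).Adj u w) :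
    ∃ f, ChordFree n S f ∧ Between n u w f := by
  induction hlen : (w - u).val using Nat.strong_induction_on generalizing u w with
  | _ d ih =>
    subst hlen
    have hsucc := between_add_one huw.ne (hS.ne_add_one huw)
    by_cases hfree : ChordFree n S (u + 1)
    · exact ⟨u + 1, hfree, hsucc⟩
    obtain ⟨y, hy⟩ := hS.exists_adj_of_not_chordFree hfree
    have hyu : y ≠ u := fun h => hS.ne_add_one (h ▸ hy.symm) rfl
    have hyw : y = w ∨ Between n u w y := or_iff_not_imp_left.2 fun hyw =>
      (hS.between_iff_of_adj huw hy hsucc.ne_left hsucc.ne_right hyu hyw).1 hsucc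
    have hsucc_y : Between n u y (u + 1) := between_add_one hyu.symm hy.ne'
    obtain ⟨f, hf, hbetween⟩ := ih _ (val_sub_lt_val_sub hsucc_y hyw) hy rfl
    exact ⟨f, hf, between_of_between_of_between hsucc_y hyw hbetween⟩

variable {v : ZMod n} {c : (chordGraph n S).Walk v v}

theorem exists_adj_forall_between (hS : NonCrossingChords n S) (hc : c.IsCycle) {p : ZMod n}
    (hp : p ∈ c.support) :
    ∃ y ∈ c.support, (chordGraph n S).Adj p y ∧
      ∀ z ∈ c.support, z = p ∨ z = y ∨ Between n p y z := by
  obtain ⟨x, y, q, hq, hxy, hpx, hpy, hpq, hsupport⟩ := exists_isPath_of_isCycle hc hp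
  wlog hx : Between n p y x generalizing x y
  · have hy : Between n p x y := between_of_not_between hpy.ne hpx.ne' hxy hx
    exact this y x q.reverse hq.reverse hxy.symm hpy hpx (by simpa using hpq)
      (by simpa using hsupport) hy
  refine ⟨y, (hsupport y).2 (Or.inr q.end_mem_support), hpy, fun z hz => ?_⟩
  obtain rfl | hzq := (hsupport z).1 hz
  · exact Or.inl rfl
  refine Or.inr (or_iff_not_imp_left.2 fun hzy => ?_)
  have hpz : p ∉ (q.takeUntil z hzq).support := fun h =>
    hpq (q.support_takeUntil_subset_support hzq h)
  have hyz := Walk.endpoint_notMem_support_takeUntil hq hzq (Ne.symm hzy)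
  exact (hS.between_iff_of_mem_support hpy _ hpz hyz (Walk.end_mem_support _)).1 hx

theorem exists_adj_isLeast_isGreatest (hS : NonCrossingChords n S) (hc : c.IsCycle) :
    ∃ a ∈ c.support, ∃ b ∈ c.support, (chordGraph n S).Adj a b ∧
      IsLeast (c.support.toFinset.image ZMod.val : Set ℕ) a.val ∧
      IsGreatest (c.support.toFinset.image ZMod.val : Set ℕ) b.val := by
  obtain ⟨a, ha, hmin⟩ := c.support.toFinset.exists_min_image ZMod.val
    ⟨v, List.mem_toFinset.2 c.start_mem_support⟩
  simp only [List.mem_toFinset] at ha hmin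
  obtain ⟨b, hb, hab, hbetween⟩ := hS.exists_adj_forall_between hc ha
  have hmax : ∀ z ∈ c.support, z.val ≤ b.val := fun z hz => by
    have haz := hmin z hz
    have hab_val := hmin b hb
    obtain rfl | rfl | hz := hbetween z hz
    · exact hab_val
    · exact le_rfl
    · rw [between_iff_val] at hz
      omega
  have hmem : ∀ z ∈ c.support, z.val ∈ c.support.toFinset.image ZMod.val := fun z hz =>
    Finset.mem_image_of_mem _ (List.mem_toFinset.2 hz)
  refine ⟨a, ha, b, hb, hab, ⟨hmem a ha, ?_⟩, ⟨hmem b hb, ?_⟩⟩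
  · simpa [mem_lowerBounds] using hmin
  · simpa [mem_upperBounds] using hmax

theorem meetsGaps (hS : NonCrossingChords n S) (hc : c.IsCycle) {F : Finset ℕ}
    (hF : ∀ f, ChordFree n S f → f.val ∈ F) :
    MeetsGaps F (c.support.toFinset.image ZMod.val) := by
  constructor
  · simp only [Finset.forall_mem_image, List.mem_toFinset, Set.mem_Ioo]
    intro p hp q hq hpq hcons
    obtain ⟨y, hy, hqy, hbetween⟩ := hS.exists_adj_forall_between hc hq
    obtain ⟨f, hf, hyqf⟩ := hS.exists_chordFree_between hqy.symm
    have hpy : p = y := by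
      obtain rfl | hpy | hqyp := hbetween p hp
      · exact absurd hpq (lt_irrefl _)
      · exact hpy
      · have hy := hcons hy
        rw [between_iff_val] at hqyp
        omega
    subst hpy
    rw [between_iff_val] at hyqf
    exact ⟨f.val, hF f hf, by omega⟩
  · obtain ⟨a, -, b, -, hab, hleast, hgreatest⟩ := hS.exists_adj_isLeast_isGreatest hc
    obtain ⟨f, hf, hbaf⟩ := hS.exists_chordFree_between hab.symm
    have hab_val := hleast.2 hgreatest.1
    have hout : f.val < a.val ∨ b.val < f.val := by
      rw [between_iff_val] at hbaf
      omega
    exact ⟨f.val, hF f hf, hout.imp (fun hlt x hx => hlt.trans_le (hleast.2 hx))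
      fun hlt x hx => (hgreatest.2 hx).trans_lt hlt⟩

theorem forall_not_between_or_forall_between (hS : NonCrossingChords n S) (hc : c.IsCycle)
    (huw : (chordGraph n S).Adj u w) (hnot : ¬ (u ∈ c.support ∧ w ∈ c.support)) :
    (∀ z ∈ c.support, ¬ Between n u w z) ∨
      ∀ z ∈ c.support, z = u ∨ z = w ∨ Between n u w z := by
  obtain ⟨x, y, q, hu, hw, hq⟩ : ∃ (x y : ZMod n) (q : (chordGraph n S).Walk x y),
      u ∉ q.support ∧ w ∉ q.support ∧ ∀ z ∈ c.support, z = u ∨ z = w ∨ z ∈ q.support := by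
    by_cases hu : u ∈ c.support
    · obtain ⟨x, y, q, -, -, -, -, huq, hq⟩ := exists_isPath_of_isCycle hc hu
      exact ⟨x, y, q, huq, by grind, by grind⟩
    by_cases hw : w ∈ c.support
    · obtain ⟨x, y, q, -, -, -, -, hwq, hq⟩ := exists_isPath_of_isCycle hc hw
      exact ⟨x, y, q, by grind, hwq, by grind⟩
    · exact ⟨v, v, c, hu, hw, fun z hz => Or.inr (Or.inr hz)⟩
  have hside := fun z => hS.between_iff_of_mem_support huw q hu hw (z := z)
  by_cases hx : Between n u w x
  · exact Or.inr fun z hz => (hq z hz).imp_right (Or.imp_right fun hzq => (hside z hzq).1 hx)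
  · refine Or.inl fun z hz hbetween => ?_
    have hzq := ((hq z hz).resolve_left hbetween.ne_left).resolve_left hbetween.ne_right
    exact hx ((hside z hzq).2 hbetween)

theorem Icc_ssubset_Icc_or_forall_notMem_Ioo (hS : NonCrossingChords n S) (hc : c.IsCycle)
    (huw : (chordGraph n S).Adj u w) (huw_val : u.val ≤ w.val)
    (hnot : ¬ (u ∈ c.support ∧ w ∈ c.support)) {a b : ZMod n} (ha : a ∈ c.support)
    (hb : b ∈ c.support) (hab : a.val ≤ b.val) :
    Set.Icc a.val b.val ⊂ Set.Icc u.val w.val ∨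
      ∀ z ∈ c.support, z.val ∉ Set.Ioo u.val w.val := by
  obtain hout | hin := hS.forall_not_between_or_forall_between hc huw hnot
  · exact Or.inr fun z hz hIoo => hout z hz (between_iff_val.2 (Or.inl hIoo))
  · have hIcc : ∀ z ∈ c.support, u.val ≤ z.val ∧ z.val ≤ w.val := fun z hz => by
      obtain rfl | rfl | hbetween := hin z hz
      · exact ⟨le_rfl, huw_val⟩
      · exact ⟨huw_val, le_rfl⟩
      · rw [between_iff_val] at hbetween
        omega
    have hsubset := Set.Icc_subset_Icc (hIcc a ha).1 (hIcc b hb).2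
    refine Or.inl (hsubset.ssubset_of_ne fun heq => hnot ?_)
    rw [Set.Icc_eq_Icc_iff hab] at heq
    exact ⟨ZMod.val_injective n heq.1 ▸ ha, ZMod.val_injective n heq.2 ▸ hb⟩

theorem two_le_ncard_chordFree (hS : NonCrossingChords n S) (hne : S.Nonempty) :
    2 ≤ {f : ZMod n | ChordFree n S f}.ncard := by
  obtain ⟨⟨u, w⟩, huw⟩ := hne
  have huw := hS.adj_iff.2 huw
  obtain ⟨f, hf, hfuw⟩ := hS.exists_chordFree_between huw
  obtain ⟨g, hg, hgwu⟩ := hS.exists_chordFree_between huw.symm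
  refine (Set.one_lt_ncard (Set.toFinite _)).2 ⟨f, hf, g, hg, ?_⟩
  rintro rfl
  exact (between_swap_iff hfuw.ne_left hfuw.ne_right huw.ne).1 hgwu hfuw

end NonCrossingChords

/-- Two blocks of a graph share at most one vertex, so this covers the boundary cycles of blocks
that the paper's Lemma 2 counts. -/
theorem chord_free_of_disjoint_cycles_general {n : ℕ} [NeZero n] {S : Set (Sym2 (ZMod n))}
    (hS : NonCrossingChords n S) (hne : S.Nonempty) {ι : Type*} [Fintype ι] {v : ι → ZMod n}
    (c : ∀ j, (chordGraph n S).Walk (v j) (v j)) (hcyc : ∀ j, (c j).IsCycle)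
    (hcommon : ∀ j j', j ≠ j' → {x | x ∈ (c j).support ∧ x ∈ (c j').support}.Subsingleton) :
    2 + ∑ j, ((c j).length - 2) ≤ {u : ZMod n | ChordFree n S u}.ncard := by
  classical
  choose a ha b hb hadj hleast hgreatest using fun j => hS.exists_adj_isLeast_isGreatest (hcyc j)
  have hinj := ZMod.val_injective n
  have hfree : ((Finset.univ.filter (ChordFree n S)).image ZMod.val).card =
      {u : ZMod n | ChordFree n S u}.ncard := by
    rw [Finset.card_image_of_injective _ hinj, ← Set.ncard_coe_finset, Finset.coe_filter_univ]
  have hcard : ∀ j, ((c j).support.toFinset.image ZMod.val).card = (c j).length := fun j => by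
    rw [Finset.card_image_of_injective _ hinj, card_toFinset_support_of_isCycle (hcyc j)]
  have hab : ∀ j, (a j).val < (b j).val := fun j =>
    ((hleast j).2 (hgreatest j).1).lt_of_ne (hinj.ne (hadj j).ne)
  simp only [← hcard, ← hfree]
  refine MeetsGaps.two_add_sum_card_sub_two_le
    (fun j _ => hS.meetsGaps (hcyc j) fun f hf => Finset.mem_image_of_mem _ (by simpa using hf))
    (hfree ▸ hS.two_le_ncard_chordFree hne) (fun j _ => hleast j) (fun j _ => hgreatest j)
    (fun j _ => hab j) fun j _ j' _ hjj' => ?_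
  have hnot : ¬ (a j' ∈ (c j).support ∧ b j' ∈ (c j).support) := fun h =>
    (hadj j').ne (hcommon j j' hjj' ⟨h.1, ha j'⟩ ⟨h.2, hb j'⟩)
  simpa only [Finset.forall_mem_image, List.mem_toFinset] using
    hS.Icc_ssubset_Icc_or_forall_notMem_Ioo (hcyc j) (hadj j') (hab j').le hnot (ha j) (hb j)
      (hab j).le

/-- Block-free rendition of the paper's Lemma 2: if the chord graph of a
nonempty set of pairwise non-crossing chords contains `k ≥ 1` pairwise
vertex-disjoint cycles of lengths `i₁, …, i_k` (each at least `3`), then the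
number of chord-free vertices is at least `2 + ∑ⱼ (iⱼ - 2)`. -/
theorem chord_free_of_disjoint_cycles (n : ℕ) (hn : 3 ≤ n)
    (S : Set (Sym2 (ZMod n))) (hS : NonCrossingChords n S) (hne : S.Nonempty)
    (k : ℕ) (hk : 1 ≤ k) (i : Fin k → ℕ) (hi : ∀ j, 3 ≤ i j)
    (v : Fin k → ZMod n) (c : ∀ j, (chordGraph n S).Walk (v j) (v j))
    (hcyc : ∀ j, (c j).IsCycle) (hlen : ∀ j, (c j).length = i j)
    (hdisj : ∀ j j', j ≠ j' → ∀ x, x ∈ (c j).support → x ∉ (c j').support) :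
    2 + ∑ j, (i j - 2) ≤ {u : ZMod n | ChordFree n S u}.ncard := by
  have : NeZero n := ⟨by omega⟩
  simpa only [hlen] using chord_free_of_disjoint_cycles_general hS hne c hcyc
    fun j j' hjj' x hx => absurd hx.2 (hdisj j j' hjj' x hx.1)
end

section
/- Let n ≥ 3 and let S be a set of pairwise non-crossing chords of the standard n-cycle such that exactly two vertices of ZMod n are chord-free for S. Then the chord graph of S is acyclic, and every connected component of the chord graph is a caterpillar. (This is the paper's Lemma 4: if a radius-1 3-polytope has exactly two vertices of degree three, then the chord graph G = F − v − E(H) is a forest all of whose components are caterpillars.) -/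
/-!
Measure positions on the cycle from one chord-free vertex `x`. An innermost chord inside an arc cut
off by a chord leaves a chord-free vertex in that arc, so, since the only other chord-free vertex is
`y`, every chord separates `x` from `y`. Placing the two arcs between `x` and `y` on two parallel
lines therefore draws the chord graph without crossings and with every edge joining the two lines.

A graph drawn in this way has no cycle: at the rightmost vertex of a cycle on one of the lines, the
cycle edge to the left neighbour would cross the second cycle edge at the right neighbour. If the
graph is finite and connected, a path from the leftmost to the rightmost vertex of one line cannot
pass by a vertex with two neighbours without using it, so such a path is the spine of a caterpillar.
-/

section TwoLayerDrawing

variable {V α : Type*} [LinearOrder α] {G : SimpleGraph V} {layer : V → Bool} {pos : V → α}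

/-- A two-layer planar drawing: vertices are placed on two parallel lines (their `layer`), at
distinct positions on each line, and the edges are straight, join different lines, and do not
cross. -/
structure IsTwoLayerDrawing (G : SimpleGraph V) (layer : V → Bool) (pos : V → α) : Prop where
  layer_ne : ∀ ⦃u v⦄, G.Adj u v → layer u ≠ layer v
  eq_of_pos_eq : ∀ ⦃u v⦄, layer u = layer v → pos u = pos v → u = v
  pos_le_of_pos_lt : ∀ ⦃u v u' v'⦄, G.Adj u v → G.Adj u' v' → layer u = layer u' →
    pos u < pos u' → pos v ≤ pos v'

/-- The part of a two-layer drawing to the left of the edge from `v` to `a`: the vertices before `v`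
on the line of `v`, and those up to and including `a` on the other line. -/
def leftOfEdge (layer : V → Bool) (pos : V → α) (v a : V) : Set V :=
  {z | layer z = layer v ∧ pos z < pos v ∨ layer z ≠ layer v ∧ pos z ≤ pos a}

lemma mem_leftOfEdge {v a z : V} : z ∈ leftOfEdge layer pos v a ↔
    layer z = layer v ∧ pos z < pos v ∨ layer z ≠ layer v ∧ pos z ≤ pos a :=
  Iff.rfl

lemma bool_eq_of_ne_of_ne {p q r : Bool} (hp : p ≠ r) (hq : q ≠ r) : p = q :=
  (Bool.eq_not.2 hp).trans (Bool.eq_not.2 hq).symm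

lemma exists_mem_support_adj_ne_of_isCycle {s : V} {c : G.Walk s s} (hc : c.IsCycle) {v : V}
    (hv : v ∈ c.support) (u : V) : ∃ w ∈ c.support, G.Adj v w ∧ w ≠ u := by
  have two_neighbors : 1 < (c.toSubgraph.neighborSet v).ncard := by
    rw [hc.ncard_neighborSet_toSubgraph_eq_two hv]
    exact one_lt_two
  obtain ⟨w, hw, hwu⟩ := Set.exists_ne_of_one_lt_ncard two_neighbors u
  exact ⟨w, c.mem_verts_toSubgraph.1 hw.snd_mem, hw.adj_sub, hwu⟩

namespace IsTwoLayerDrawing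

lemma induce (h : IsTwoLayerDrawing G layer pos) (s : Set V) :
    IsTwoLayerDrawing (G.induce s) (fun v ↦ layer v) (fun v ↦ pos v) where
  layer_ne _ _ huv := h.layer_ne huv
  eq_of_pos_eq _ _ hlayer hpos := Subtype.ext (h.eq_of_pos_eq hlayer hpos)
  pos_le_of_pos_lt _ _ _ _ huv huv' hlayer hlt := h.pos_le_of_pos_lt huv huv' hlayer hlt

lemma layer_eq_of_adj_of_adj (h : IsTwoLayerDrawing G layer pos) {v a b : V} (hva : G.Adj v a)
    (hvb : G.Adj v b) : layer a = layer b :=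
  bool_eq_of_ne_of_ne (h.layer_ne hva).symm (h.layer_ne hvb).symm

lemma pos_ne_of_adj_of_adj (h : IsTwoLayerDrawing G layer pos) {v a b : V} (hva : G.Adj v a)
    (hvb : G.Adj v b) (hab : a ≠ b) : pos a ≠ pos b :=
  fun hpos ↦ hab (h.eq_of_pos_eq (h.layer_eq_of_adj_of_adj hva hvb) hpos)

theorem isAcyclic (h : IsTwoLayerDrawing G layer pos) : G.IsAcyclic := by
  intro s c hc
  have finite_support : {z | z ∈ c.support ∧ layer z = layer s}.Finite :=
    c.support.finite_toSet.subset fun _ hz ↦ hz.1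
  obtain ⟨v, ⟨hv, hvs⟩, hmax⟩ :=
    Set.exists_max_image _ pos finite_support ⟨s, c.start_mem_support, rfl⟩
  obtain ⟨a, ha, hva, -⟩ := exists_mem_support_adj_ne_of_isCycle hc hv v
  obtain ⟨b, hb, hvb, hba⟩ := exists_mem_support_adj_ne_of_isCycle hc hv a
  wlog hlt : pos a < pos b generalizing a b
  · exact this b hb hvb a ha hva hba.symm
      ((h.pos_ne_of_adj_of_adj hvb hva hba).lt_of_le (not_lt.1 hlt))
  obtain ⟨w, hw, hbw, hwv⟩ := exists_mem_support_adj_ne_of_isCycle hc hb v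
  have hlayer : layer w = layer v := h.layer_eq_of_adj_of_adj hbw hvb.symm
  have hwv_lt : pos w < pos v :=
    (h.pos_ne_of_adj_of_adj hbw hvb.symm hwv).lt_of_le (hmax w ⟨hw, hlayer.trans hvs⟩)
  exact (h.pos_le_of_pos_lt hbw.symm hva hlayer hwv_lt).not_gt hlt

lemma eq_of_adj_of_mem_leftOfEdge (h : IsTwoLayerDrawing G layer pos) {v a b y z : V}
    (hva : G.Adj v a) (hvb : G.Adj v b) (hab : pos a < pos b) (hyz : G.Adj y z)
    (hy : y ∈ leftOfEdge layer pos v a) (hz : z ∉ leftOfEdge layer pos v a) : z = v := by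
  have hyz_layer := h.layer_ne hyz
  simp only [mem_leftOfEdge, not_or, not_and, not_lt, not_le] at hy hz
  obtain ⟨hyv, hlt⟩ | ⟨hyv, hle⟩ := hy
  · exact absurd (h.pos_le_of_pos_lt hyz hva hyv hlt)
      (hz.2 fun hzv ↦ hyz_layer (hyv.trans hzv.symm)).not_ge
  · have hzv : layer z = layer v := bool_eq_of_ne_of_ne hyz_layer.symm hyv.symm
    refine h.eq_of_pos_eq hzv ((hz.1 hzv).eq_of_not_lt fun hlt ↦ ?_).symm
    exact (h.pos_le_of_pos_lt hvb hyz.symm hzv.symm hlt).not_gt (hle.trans_lt hab)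

lemma mem_support_of_walk_min_max (h : IsTwoLayerDrawing G layer pos) {u w : V} (p : G.Walk u w)
    (hmin : ∀ z, layer z = layer u → pos u ≤ pos z)
    (hmax : ∀ z, layer z = layer u → pos z ≤ pos w) (huw : layer w = layer u) {v a b : V}
    (hva : G.Adj v a) (hvb : G.Adj v b) (hab : pos a < pos b) : v ∈ p.support := by
  by_cases huv : u = v
  · exact huv ▸ p.start_mem_support
  have hu : u ∈ leftOfEdge layer pos v a := by
    by_cases hlayer : layer v = layer u
    · exact .inl ⟨hlayer.symm,
        (hmin v hlayer).lt_of_ne fun hpos ↦ huv (h.eq_of_pos_eq hlayer.symm hpos)⟩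
    · have hau : layer a = layer u := bool_eq_of_ne_of_ne (h.layer_ne hva).symm (Ne.symm hlayer)
      exact .inr ⟨Ne.symm hlayer, hmin a hau⟩
  have hw : w ∉ leftOfEdge layer pos v a := by
    rintro (⟨hlayer, hlt⟩ | ⟨hlayer, hle⟩)
    · exact (hmax v (hlayer.symm.trans huw)).not_gt hlt
    · have hbw : layer b = layer w := bool_eq_of_ne_of_ne (h.layer_ne hvb).symm hlayer
      exact (hmax b (hbw.trans huw)).not_gt (hle.trans_lt hab)
  obtain ⟨d, hd, hfst, hsnd⟩ := p.exists_boundary_dart _ hu hw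
  exact h.eq_of_adj_of_mem_leftOfEdge hva hvb hab d.adj hfst hsnd ▸
    p.dart_snd_mem_support_of_mem_darts hd

theorem isCaterpillar [Finite V] (h : IsTwoLayerDrawing G layer pos) (hG : G.Connected) :
    IsCaterpillar G := by
  refine ⟨hG, h.isAcyclic, ?_⟩
  obtain ⟨o⟩ := hG.nonempty
  let line : Set V := {z | layer z = layer o}
  obtain ⟨u, hu, hmin⟩ := Set.exists_min_image line pos line.toFinite ⟨o, rfl⟩
  obtain ⟨w, hw, hmax⟩ := Set.exists_max_image line pos line.toFinite ⟨o, rfl⟩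
  obtain ⟨p, hp⟩ := (hG.preconnected u w).exists_isPath
  refine ⟨u, w, p, hp, ?_⟩
  rintro v ⟨a, b, hab, hva, hvb⟩
  have mem_support {a b : V} (hva : G.Adj v a) (hvb : G.Adj v b) (hlt : pos a < pos b) :
      v ∈ p.support :=
    h.mem_support_of_walk_min_max p (fun z hz ↦ hmin z (hz.trans hu))
      (fun z hz ↦ hmax z (hz.trans hu)) (hw.trans hu.symm) hva hvb hlt
  obtain hlt | hlt := (h.pos_ne_of_adj_of_adj hva hvb hab).lt_or_gt
  · exact mem_support hva hvb hlt
  · exact mem_support hvb hva hlt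

end IsTwoLayerDrawing

end TwoLayerDrawing

section Offset

/-- The number of steps from `x` to `v` along the cycle `ZMod n` in the direction of increasing
residues. It serves as a coordinate in `{0, …, n - 1}` when `n ≠ 0`. -/
def offset {n : ℕ} (x v : ZMod n) : ℕ := (v - x).val

variable {n : ℕ}

lemma offset_self (x : ZMod n) : offset x x = 0 := by
  simp [offset]

lemma offset_add_one {x a : ZMod n} (h : offset x a + 1 < n) :
    offset x (a + 1) = offset x a + 1 := by
  have hone : (1 : ZMod n).val = 1 := ZMod.val_one'' (by omega)
  unfold offset at h ⊢
  rw [add_sub_right_comm, ZMod.val_add_of_lt (by rwa [hone]), hone]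

variable [NeZero n]

lemma offset_lt (x v : ZMod n) : offset x v < n :=
  ZMod.val_lt _

lemma offset_injective (x : ZMod n) : Function.Injective (offset x) := fun _ _ h ↦
  sub_left_injective (ZMod.val_injective n h)

lemma offset_add_offset (x a v : ZMod n) :
    offset x a + offset a v = offset x v ∨ offset x a + offset a v = offset x v + n := by
  have hsum : (a - x) + (v - a) = v - x := by ring
  unfold offset
  obtain hlt | hle := lt_or_ge ((a - x).val + (v - a).val) n
  · exact .inl (by rw [← ZMod.val_add_of_lt hlt, hsum])
  · exact .inr (by rw [ZMod.val_add_val_of_le hle, hsum])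

lemma between_iff_of_offset_lt {x a b v : ZMod n} (hab : offset x a < offset x b) :
    Between n a b v ↔ offset x a < offset x v ∧ offset x v < offset x b := by
  change 0 < offset a v ∧ offset a v < offset a b ↔ _
  have := offset_add_offset x a v
  have := offset_add_offset x a b
  have := offset_lt x b
  have := offset_lt x v
  have := offset_lt a v
  have := offset_lt a b
  omega

lemma between_iff_of_offset_gt {x a b v : ZMod n} (hab : offset x b < offset x a) :
    Between n a b v ↔ offset x v < offset x b ∨ offset x a < offset x v := by
  change 0 < offset a v ∧ offset a v < offset a b ↔ _
  have := offset_add_offset x a v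
  have := offset_add_offset x a b
  have := offset_lt x a
  have := offset_lt x v
  have := offset_lt a v
  have := offset_lt a b
  omega

lemma cross_of_offset_lt {x a b c d : ZMod n} (hac : offset x a < offset x c)
    (hcb : offset x c < offset x b) (hbd : offset x b < offset x d) :
    Cross n s(a, b) s(c, d) := by
  have hab := hac.trans hcb
  intro a' b' c' d' h h'
  change Xor _ _
  obtain ⟨rfl, rfl⟩ | ⟨rfl, rfl⟩ := Sym2.eq_iff.1 h <;>
    obtain ⟨rfl, rfl⟩ | ⟨rfl, rfl⟩ := Sym2.eq_iff.1 h' <;>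
    simp only [between_iff_of_offset_lt hab, between_iff_of_offset_gt hab, xor_def] <;>
    omega

lemma IsChord.offset_add_one_lt {x a b : ZMod n} (h : IsChord n s(a, b))
    (hab : offset x a < offset x b) : offset x a + 1 < offset x b := by
  refine lt_of_le_of_ne hab fun heq ↦ h.2 ⟨a, ?_⟩
  have hsucc : offset x (a + 1) = offset x b :=
    (offset_add_one (heq ▸ offset_lt x b)).trans heq
  rw [offset_injective x hsucc]

end Offset

lemma mem_of_adj_chordGraph {n : ℕ} {S : Set (Sym2 (ZMod n))} {a b : ZMod n}
    (h : (chordGraph n S).Adj a b) : s(a, b) ∈ S :=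
  ((SimpleGraph.fromEdgeSet_adj S).1 h).1

namespace NonCrossingChords

variable {n : ℕ} [NeZero n] {S : Set (Sym2 (ZMod n))} {x y a b c d : ZMod n}

lemma offset_le_of_offset_lt (hS : NonCrossingChords n S) (hab : s(a, b) ∈ S) (hcd : s(c, d) ∈ S)
    (hac : offset x a < offset x c) (hcb : offset x c < offset x b) :
    offset x d ≤ offset x b := by
  by_contra! hbd
  refine hS.2 _ hab _ hcd (fun heq ↦ ?_) (cross_of_offset_lt hac hcb hbd)
  obtain ⟨rfl, rfl⟩ | ⟨rfl, rfl⟩ := Sym2.eq_iff.1 heq <;> omega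

lemma le_offset_of_offset_lt (hS : NonCrossingChords n S) (hab : s(a, b) ∈ S) (hcd : s(c, d) ∈ S)
    (hac : offset x a < offset x c) (hcb : offset x c < offset x b) :
    offset x a ≤ offset x d := by
  by_contra! hda
  exact (hS.offset_le_of_offset_lt (Sym2.eq_swap ▸ hcd) hab hda hac).not_gt hcb

lemma exists_mem_add_one_of_not_chordFree (hS : NonCrossingChords n S) (hab : s(a, b) ∈ S)
    (hlt : offset x a < offset x b) (hfree : ¬ ChordFree n S (a + 1)) :
    ∃ c, s(a + 1, c) ∈ S ∧ offset x (a + 1) < offset x c ∧ offset x c ≤ offset x b := by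
  have hgap := (hS.1 _ hab).offset_add_one_lt hlt
  have hsucc : offset x (a + 1) = offset x a + 1 := offset_add_one (hgap.trans (offset_lt x b))
  simp only [ChordFree, not_forall, not_not] at hfree
  obtain ⟨e, he, hmem⟩ := hfree
  obtain ⟨c, rfl⟩ := Sym2.mem_iff_exists.1 hmem
  have hle := hS.offset_le_of_offset_lt hab he (x := x) (by omega) (by omega)
  have hge := hS.le_offset_of_offset_lt hab he (x := x) (by omega) (by omega)
  refine ⟨c, he, ?_, hle⟩
  have hne : offset x c ≠ offset x (a + 1) := fun heq ↦
    (hS.1 _ he).1 (offset_injective x heq).symm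
  by_contra! hca
  have := (hS.1 _ (Sym2.eq_swap ▸ he)).offset_add_one_lt (hca.lt_of_ne hne)
  omega

lemma exists_chordFree_offset_between (hS : NonCrossingChords n S) (hab : s(a, b) ∈ S)
    (hlt : offset x a < offset x b) :
    ∃ v, ChordFree n S v ∧ offset x a < offset x v ∧ offset x v < offset x b := by
  induction hgap : offset x b - offset x a using Nat.strong_induction_on generalizing a b with
  | _ _ ih =>
    have hchord := (hS.1 _ hab).offset_add_one_lt hlt
    have hsucc : offset x (a + 1) = offset x a + 1 := offset_add_one (hchord.trans (offset_lt x b))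
    by_cases hfree : ChordFree n S (a + 1)
    · exact ⟨a + 1, hfree, by omega, by omega⟩
    obtain ⟨c, hac, hlt', hle⟩ := hS.exists_mem_add_one_of_not_chordFree hab hlt hfree
    obtain ⟨v, hv, hav, hvc⟩ := ih _ (by omega) hac hlt' rfl
    exact ⟨v, hv, by omega, by omega⟩

lemma offset_separated (hS : NonCrossingChords n S)
    (hfree : ∀ v, ChordFree n S v → v = x ∨ v = y) (hab : s(a, b) ∈ S)
    (hlt : offset x a < offset x b) :
    offset x a < offset x y ∧ offset x y < offset x b := by
  obtain ⟨v, hv, hav, hvb⟩ := hS.exists_chordFree_offset_between hab hlt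
  obtain rfl | rfl := hfree v hv
  · simp [offset_self] at hav
  · exact ⟨hav, hvb⟩

lemma offset_separated_of_adj (hS : NonCrossingChords n S)
    (hfree : ∀ v, ChordFree n S v → v = x ∨ v = y) (hab : (chordGraph n S).Adj a b) :
    offset x a < offset x y ∧ offset x y < offset x b ∨
      offset x b < offset x y ∧ offset x y < offset x a := by
  have hmem := mem_of_adj_chordGraph hab
  obtain hlt | hlt := ((offset_injective x).ne hab.ne).lt_or_gt
  · exact .inl (hS.offset_separated hfree hmem hlt)
  · exact .inr (hS.offset_separated hfree (Sym2.eq_swap ▸ hmem) hlt)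

end NonCrossingChords

/-- Whether `v` lies on the arc of the cycle that starts at `x` and ends just before `y`. -/
def onFirstArc {n : ℕ} (x y v : ZMod n) : Bool :=
  decide (offset x v < offset x y)

/-- The coordinate of `v` along the arc between `x` and `y` that contains it. The sign reverses the
second arc, so that both arcs are read in the same direction when drawn as parallel lines. -/
def arcPos {n : ℕ} (x y v : ZMod n) : ℤ :=
  if offset x v < offset x y then offset x v else -offset x v

theorem NonCrossingChords.isTwoLayerDrawing {n : ℕ} [NeZero n] {S : Set (Sym2 (ZMod n))}
    {x y : ZMod n} (hS : NonCrossingChords n S) (hfree : ∀ v, ChordFree n S v → v = x ∨ v = y) :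
    IsTwoLayerDrawing (chordGraph n S) (onFirstArc x y) (arcPos x y) where
  layer_ne a b hab := by
    have := hS.offset_separated_of_adj hfree hab
    simp only [onFirstArc, ne_eq, decide_eq_decide]
    omega
  eq_of_pos_eq a b hlayer hpos := by
    simp only [onFirstArc, decide_eq_decide, arcPos] at hlayer hpos
    exact offset_injective x (by split_ifs at hpos <;> omega)
  pos_le_of_pos_lt a b a' b' hab hab' hlayer hlt := by
    have hsep := hS.offset_separated_of_adj hfree hab
    have hsep' := hS.offset_separated_of_adj hfree hab'
    have hmem := mem_of_adj_chordGraph hab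
    have hmem' := mem_of_adj_chordGraph hab'
    simp only [onFirstArc, decide_eq_decide, arcPos] at hlayer hlt ⊢
    by_cases ha : offset x a < offset x y
    · have := hS.offset_le_of_offset_lt hmem hmem' (x := x)
      split_ifs at hlt ⊢ <;> omega
    · have := hS.offset_le_of_offset_lt (Sym2.eq_swap ▸ hmem') (Sym2.eq_swap ▸ hmem) (x := x)
      split_ifs at hlt ⊢ <;> omega

/-- The paper's Lemma 4: if a set of pairwise non-crossing chords of the
standard `n`-cycle leaves exactly two chord-free vertices, then the chord graph
is acyclic and all of its connected components are caterpillars. -/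
theorem forest_of_caterpillars (n : ℕ) (hn : 3 ≤ n) (S : Set (Sym2 (ZMod n)))
    (hS : NonCrossingChords n S)
    (h2 : {u : ZMod n | ChordFree n S u}.ncard = 2) :
    (chordGraph n S).IsAcyclic ∧
      ∀ C : (chordGraph n S).ConnectedComponent,
        IsCaterpillar ((chordGraph n S).induce C.supp) := by
  have : NeZero n := ⟨by omega⟩
  obtain ⟨x, y, -, hxy⟩ := Set.ncard_eq_two.1 h2
  have hfree (v : ZMod n) (hv : ChordFree n S v) : v = x ∨ v = y := hxy.subset hv
  have hdraw := hS.isTwoLayerDrawing hfree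
  exact ⟨hdraw.isAcyclic, fun C ↦ (hdraw.induce C.supp).isCaterpillar C.connected_toSimpleGraph⟩
end

section
/- Let x, y ≥ 2 be integers. Then there exist two non-isomorphic forests on x + y + 2 vertices, each acyclic with exactly two connected components, whose multiset of vertex degrees is {x, y} together with x + y entries equal to 1. (Concretely, the caterpillar with two adjacent centres of degrees x and y together with a disjoint edge K_2, versus the disjoint union of the stars S_x and S_y; this is the claim used in the proof of the paper's Theorem 1 to rule out two vertices of degree at least 2 in distinct forms from a unigraphic forest.) -/
/-!
For `x = m + 1` and `y = n + 1` the two forests are disjoint unions of two trees: the double star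
obtained from `S_m` and `S_n` by joining their centres, together with `S_1 = K₂`; and the stars
`S_x` and `S_y`. Joining the centres raises their degrees from `m` and `n` to `x` and `y`, so the
degree multisets agree. A component `K₂` occurs in the first forest but not in the second, because
`S_k` is `K₂` only for `k = 1`.
-/

section TwoForests

open SimpleGraph

variable {V W : Type*} {G : SimpleGraph V} {H : SimpleGraph W}

section DisjointSum

theorem reachable_sum_inl {v v' : V} :
    (G ⊕g H).Reachable (.inl v) (.inl v') ↔ G.Reachable v v' := by
  refine ⟨fun ⟨walk⟩ ↦ ?_, fun h ↦ h.map Embedding.sumInl.toHom⟩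
  suffices stays_left : ∀ {a b : V ⊕ W}, (G ⊕g H).Walk a b →
      ∀ u u', a = .inl u → b = .inl u' → G.Reachable u u' from stays_left walk _ _ rfl rfl
  intro a b walk
  induction walk with
  | nil => rintro u u' rfl ⟨⟩; exact .rfl
  | @cons _ c _ adj _ ih =>
    rintro u u' rfl rfl
    cases c with
    | inl c => exact (sum_adj_inl.1 adj).reachable.trans (ih c u' rfl rfl)
    | inr c => exact (not_adj_sum_inl_inr _ _ adj).elim

theorem reachable_sum_inr {w w' : W} :
    (G ⊕g H).Reachable (.inr w) (.inr w') ↔ H.Reachable w w' :=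
  (Iso.reachable_iff (φ := Iso.sumComm)).symm.trans reachable_sum_inl

theorem isBridge_sum_inl {v v' : V} (h : G.IsBridge s(v, v')) :
    (G ⊕g H).IsBridge s(.inl v, .inl v') := by
  have le_sum : (G ⊕g H).deleteEdges {s(.inl v, .inl v')} ≤ G.deleteEdges {s(v, v')} ⊕g H := by
    rintro (a | a) (b | b) <;> simp [deleteEdges_adj]
  rw [isBridge_iff] at h ⊢
  exact fun reach ↦ h (reachable_sum_inl.1 (reach.mono le_sum))

theorem isBridge_sum_inr {w w' : W} (h : H.IsBridge s(w, w')) :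
    (G ⊕g H).IsBridge s(.inr w, .inr w') := by
  have le_sum : (G ⊕g H).deleteEdges {s(.inr w, .inr w')} ≤ G ⊕g H.deleteEdges {s(w, w')} := by
    rintro (a | a) (b | b) <;> simp [deleteEdges_adj]
  rw [isBridge_iff] at h ⊢
  exact fun reach ↦ h (reachable_sum_inr.1 (reach.mono le_sum))

theorem isAcyclic_sum (hG : G.IsAcyclic) (hH : H.IsAcyclic) : (G ⊕g H).IsAcyclic := by
  rw [isAcyclic_iff_forall_adj_isBridge] at hG hH ⊢
  rintro (v | w) (v' | w') adj
  · exact isBridge_sum_inl (hG (sum_adj_inl.1 adj))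
  · exact (not_adj_sum_inl_inr _ _ adj).elim
  · exact (not_adj_sum_inl_inr _ _ adj.symm).elim
  · exact isBridge_sum_inr (hH (sum_adj_inr.1 adj))

theorem isTree_sum_sup_edge (hG : G.IsTree) (hH : H.IsTree) (v : V) (w : W) :
    ((G ⊕g H) ⊔ edge (.inl v) (.inr w)).IsTree :=
  ⟨hG.connected.sum_sup_edge hH.connected, (isAcyclic_sum hG.isAcyclic hH.isAcyclic)
    |>.sup_edge_of_not_reachable (not_reachable_sum_inl_inr v w)⟩

theorem bijective_connectedComponent_sum :
    Function.Bijective (Sum.elim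
      (ConnectedComponent.map (Embedding.sumInl (G := G) (H := H)).toHom)
      (ConnectedComponent.map (Embedding.sumInr (G := G) (H := H)).toHom)) := by
  refine ⟨Function.Injective.sumElim ?_ ?_ ?_, ?_⟩
  · rintro ⟨v⟩ ⟨v'⟩ h
    exact ConnectedComponent.sound (reachable_sum_inl.1 (ConnectedComponent.exact h))
  · rintro ⟨w⟩ ⟨w'⟩ h
    exact ConnectedComponent.sound (reachable_sum_inr.1 (ConnectedComponent.exact h))
  · rintro ⟨v⟩ ⟨w⟩ h
    exact not_reachable_sum_inl_inr v w (ConnectedComponent.exact h)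
  · rintro ⟨v | w⟩
    · exact ⟨.inl (G.connectedComponentMk v), rfl⟩
    · exact ⟨.inr (H.connectedComponentMk w), rfl⟩

theorem card_connectedComponent_sum [Finite G.ConnectedComponent] [Finite H.ConnectedComponent] :
    Nat.card (G ⊕g H).ConnectedComponent =
      Nat.card G.ConnectedComponent + Nat.card H.ConnectedComponent := by
  rw [← Nat.card_sum, Nat.card_eq_of_bijective _ bijective_connectedComponent_sum]

theorem card_connectedComponent_eq_one (hG : G.Connected) : Nat.card G.ConnectedComponent = 1 :=
  Nat.card_eq_one_iff_unique.2
    ⟨hG.preconnected.subsingleton_connectedComponent, hG.nonempty.map G.connectedComponentMk⟩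

theorem card_connectedComponent_sum_of_connected (hG : G.Connected) (hH : H.Connected) :
    Nat.card (G ⊕g H).ConnectedComponent = 2 := by
  have := hG.preconnected.subsingleton_connectedComponent
  have := hH.preconnected.subsingleton_connectedComponent
  rw [card_connectedComponent_sum, card_connectedComponent_eq_one hG,
    card_connectedComponent_eq_one hH]

end DisjointSum

section Degree

theorem degree_sum_inl (v : V) [Fintype (G.neighborSet v)]
    [Fintype ((G ⊕g H).neighborSet (.inl v))] : (G ⊕g H).degree (.inl v) = G.degree v := by
  simp_rw [← card_neighborSet_eq_degree, ← Nat.card_eq_fintype_card, neighborSet_sum_inl,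
    Nat.card_image_of_injective Sum.inl_injective]

theorem degree_sum_inr (w : W) [Fintype (H.neighborSet w)]
    [Fintype ((G ⊕g H).neighborSet (.inr w))] : (G ⊕g H).degree (.inr w) = H.degree w := by
  simp_rw [← card_neighborSet_eq_degree, ← Nat.card_eq_fintype_card, neighborSet_sum_inr,
    Nat.card_image_of_injective Sum.inr_injective]

variable [Fintype V] [Fintype W]

theorem degMultiset_eq_map_degree [DecidableRel G.Adj] :
    degMultiset G = Finset.univ.val.map (G.degree ·) := by
  unfold degMultiset
  congr!

theorem degMultiset_congr (e : G ≃g H) : degMultiset G = degMultiset H := by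
  classical
  rw [degMultiset_eq_map_degree, degMultiset_eq_map_degree,
    ← Finset.univ_map_equiv_to_embedding e.toEquiv, Finset.map_val, Multiset.map_map]
  exact Multiset.map_congr rfl fun v _ ↦ (e.degree_eq v).symm

theorem degMultiset_sum : degMultiset (G ⊕g H) = degMultiset G + degMultiset H := by
  classical
  simp only [degMultiset_eq_map_degree, ← Finset.univ_disjSum_univ, Finset.val_disjSum,
    Multiset.disjSum, Multiset.map_add, Multiset.map_map, Function.comp_def, degree_sum_inl,
    degree_sum_inr]

theorem degMultiset_starGraph (r : V) :
    degMultiset (starGraph r) =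
      (Fintype.card V - 1) ::ₘ Multiset.replicate (Fintype.card V - 1) 1 := by
  classical
  have leaves : (Finset.univ.erase r).val.map ((starGraph r).degree ·) =
      Multiset.replicate (Fintype.card V - 1) 1 := by
    rw [Multiset.map_congr rfl fun v hv ↦
      degree_starGraph_of_ne_center (Finset.ne_of_mem_erase hv), Multiset.map_const']
    simp
  rw [degMultiset_eq_map_degree, ← Finset.insert_erase (Finset.mem_univ r),
    Finset.insert_val_of_notMem (Finset.notMem_erase r _), Multiset.map_cons, leaves,
    degree_starGraph_center]

theorem degree_sup_edge_left [DecidableEq V] [DecidableRel G.Adj] {s t : V} (hne : s ≠ t)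
    (hadj : ¬ G.Adj s t) : (G ⊔ edge s t).degree s = G.degree s + 1 := by
  have neighbors : (G ⊔ edge s t).neighborFinset s = insert t (G.neighborFinset s) := by
    ext v
    simp only [mem_neighborFinset, sup_adj, edge_adj, Finset.mem_insert]
    grind
  rw [← card_neighborFinset_eq_degree, neighbors,
    Finset.card_insert_of_notMem (by simpa using hadj), card_neighborFinset_eq_degree]

theorem degree_sup_edge_right [DecidableEq V] [DecidableRel G.Adj] {s t : V} (hne : s ≠ t)
    (hadj : ¬ G.Adj s t) : (G ⊔ edge s t).degree t = G.degree t + 1 := by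
  convert degree_sup_edge_left hne.symm (mt Adj.symm hadj) using 2
  rw [edge_comm]

theorem degree_sup_edge_of_ne [DecidableEq V] [DecidableRel G.Adj] {s t v : V} (hs : v ≠ s)
    (ht : v ≠ t) : (G ⊔ edge s t).degree v = G.degree v := by
  simp_rw [← card_neighborFinset_eq_degree]
  congr 1
  ext w
  simp [edge_adj, hs, ht]

theorem degMultiset_sup_edge [DecidableRel G.Adj] {s t : V} (hne : s ≠ t) (hadj : ¬ G.Adj s t)
    {a b : ℕ} {M : Multiset ℕ} (hs : G.degree s = a) (ht : G.degree t = b)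
    (hM : degMultiset G = a ::ₘ b ::ₘ M) :
    degMultiset (G ⊔ edge s t) = (a + 1) ::ₘ (b + 1) ::ₘ M := by
  classical
  have univ_eq : (Finset.univ : Finset V).val =
      s ::ₘ t ::ₘ ((Finset.univ.erase s).erase t).val := by
    rw [← Finset.insert_val_of_notMem (Finset.notMem_erase t _),
      Finset.insert_erase (by simp [hne.symm]),
      ← Finset.insert_val_of_notMem (Finset.notMem_erase s _),
      Finset.insert_erase (Finset.mem_univ s)]
  have rest : ((Finset.univ.erase s).erase t).val.map ((G ⊔ edge s t).degree ·) = M := by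
    rw [degMultiset_eq_map_degree, univ_eq] at hM
    simp only [Multiset.map_cons, hs, ht, Multiset.cons_inj_right] at hM
    rw [← hM]
    refine Multiset.map_congr rfl fun v hv ↦ degree_sup_edge_of_ne ?_ ?_ <;> grind
  rw [degMultiset_eq_map_degree, univ_eq, Multiset.map_cons, Multiset.map_cons, rest,
    degree_sup_edge_left hne hadj, degree_sup_edge_right hne hadj, hs, ht]

end Degree

section IsolatedEdge

/-- `G` has an isolated edge, that is, a connected component `K₂`. This isomorphism invariant
tells the two forests apart. -/
def HasIsolatedEdge (G : SimpleGraph V) : Prop :=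
  ∃ v w, G.neighborSet v = {w} ∧ G.neighborSet w = {v}

theorem HasIsolatedEdge.of_iso (e : G ≃g H) : HasIsolatedEdge G → HasIsolatedEdge H := by
  rintro ⟨v, w, hv, hw⟩
  have neighborSet_map (u : V) : H.neighborSet (e u) = e '' G.neighborSet u := by
    ext x
    obtain ⟨x, rfl⟩ := e.surjective x
    simpa using e.map_adj_iff
  exact ⟨e v, e w, by simp [neighborSet_map, hv], by simp [neighborSet_map, hw]⟩

theorem hasIsolatedEdge_sum :
    HasIsolatedEdge (G ⊕g H) ↔ HasIsolatedEdge G ∨ HasIsolatedEdge H := by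
  constructor
  · rintro ⟨v | v, w | w, hv, hw⟩ <;>
      simp only [neighborSet_sum_inl, neighborSet_sum_inr, Set.ext_iff] at hv hw
    · exact .inl ⟨v, w, by ext u; simpa using hv (.inl u), by ext u; simpa using hw (.inl u)⟩
    · simpa using hv (.inr w)
    · simpa using hv (.inl w)
    · exact .inr ⟨v, w, by ext u; simpa using hv (.inr u), by ext u; simpa using hw (.inr u)⟩
  · rintro (⟨v, w, hv, hw⟩ | ⟨v, w, hv, hw⟩)
    · exact ⟨.inl v, .inl w, by simp [neighborSet_sum_inl, hv], by simp [neighborSet_sum_inl, hw]⟩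
    · exact ⟨.inr v, .inr w, by simp [neighborSet_sum_inr, hv], by simp [neighborSet_sum_inr, hw]⟩

theorem hasIsolatedEdge_starGraph {r : V} : HasIsolatedEdge (starGraph r) ↔ Nat.card V = 2 := by
  simp only [HasIsolatedEdge, Set.ext_iff, mem_neighborSet, starGraph_adj, Set.mem_singleton_iff]
  rw [Nat.card_eq_two_iff' r]
  constructor
  · rintro ⟨v, w, hv, hw⟩
    obtain ⟨hne, rfl | rfl⟩ := (hv w).2 rfl
    · exact ⟨w, hne.symm, fun u hu ↦ (hv u).1 ⟨hu.symm, .inl rfl⟩⟩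
    · exact ⟨v, hne, fun u hu ↦ (hw u).1 ⟨hu.symm, .inl rfl⟩⟩
  · rintro ⟨s, hs, unique⟩
    refine ⟨r, s, fun u ↦ ⟨fun h ↦ unique u h.1.symm, ?_⟩,
      fun u ↦ ⟨fun h ↦ h.2.resolve_left hs, ?_⟩⟩
    · rintro rfl
      exact ⟨hs.symm, .inl rfl⟩
    · rintro rfl
      exact ⟨hs, .inr rfl⟩

end IsolatedEdge

section Star

/-- The star `S_m`, with centre `0`. -/
def finStar (m : ℕ) : SimpleGraph (Fin (m + 1)) := starGraph 0

/-- The caterpillar obtained from the disjoint stars `S_m` and `S_n` by joining their centres, which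
then have degrees `m + 1` and `n + 1`. -/
def doubleStar (m n : ℕ) : SimpleGraph (Fin (m + 1) ⊕ Fin (n + 1)) :=
  (finStar m ⊕g finStar n) ⊔ edge (.inl 0) (.inr 0)

variable (m n : ℕ)

theorem isTree_finStar : (finStar m).IsTree := isTree_starGraph 0

theorem isTree_doubleStar : (doubleStar m n).IsTree :=
  isTree_sum_sup_edge (isTree_finStar m) (isTree_finStar n) 0 0

theorem degree_finStar_zero [Fintype ((finStar m).neighborSet 0)] : (finStar m).degree 0 = m := by
  convert degree_starGraph_center (r := (0 : Fin (m + 1)))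
  · rfl
  · simp

theorem degMultiset_finStar : degMultiset (finStar m) = m ::ₘ Multiset.replicate m 1 := by
  simp [finStar, degMultiset_starGraph]

theorem degMultiset_finStar_sum_finStar :
    degMultiset (finStar m ⊕g finStar n) = m ::ₘ n ::ₘ Multiset.replicate (m + n) 1 := by
  rw [degMultiset_sum, degMultiset_finStar, degMultiset_finStar, Multiset.cons_add,
    Multiset.add_cons, ← Multiset.replicate_add]

theorem degMultiset_doubleStar :
    degMultiset (doubleStar m n) =
      (m + 1) ::ₘ (n + 1) ::ₘ Multiset.replicate (m + n) 1 := by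
  classical
  exact degMultiset_sup_edge Sum.inl_ne_inr (not_adj_sum_inl_inr 0 0)
    (by rw [degree_sum_inl, degree_finStar_zero])
    (by rw [degree_sum_inr, degree_finStar_zero]) (degMultiset_finStar_sum_finStar m n)

theorem degMultiset_doubleStar_sum_finStar_one :
    degMultiset (doubleStar m n ⊕g finStar 1) =
      (m + 1) ::ₘ (n + 1) ::ₘ Multiset.replicate (m + 1 + (n + 1)) 1 := by
  rw [degMultiset_sum, degMultiset_doubleStar, degMultiset_finStar, Multiset.cons_add,
    Multiset.cons_add, ← Multiset.replicate_succ, ← Multiset.replicate_add]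
  congr 3
  omega

variable {m n}

theorem hasIsolatedEdge_finStar : HasIsolatedEdge (finStar m) ↔ m = 1 := by
  simp [finStar, hasIsolatedEdge_starGraph]

theorem not_nonempty_iso_finStar_sum_finStar (hm : m ≠ 1) (hn : n ≠ 1) :
    ¬ Nonempty (G ⊕g finStar 1 ≃g finStar m ⊕g finStar n) := by
  rintro ⟨e⟩
  have := HasIsolatedEdge.of_iso e (hasIsolatedEdge_sum.2 (.inr (hasIsolatedEdge_finStar.2 rfl)))
  simp [hasIsolatedEdge_sum, hasIsolatedEdge_finStar, hm, hn] at this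

end Star

end TwoForests

/-- For `x, y ≥ 2` there are two non-isomorphic forests on `x + y + 2` vertices,
each with exactly two connected components, with degree multiset
`{x, y, 1^(x+y)}` (caterpillar `C(x,y)` plus `K₂`, versus `S_x ⊔ S_y`). -/
theorem two_forest_realisations (x y : ℕ) (hx : 2 ≤ x) (hy : 2 ≤ y) :
    ∃ G G' : SimpleGraph (Fin (x + y + 2)),
      G.IsAcyclic ∧ G'.IsAcyclic ∧
      Nat.card G.ConnectedComponent = 2 ∧
      Nat.card G'.ConnectedComponent = 2 ∧
      degMultiset G = x ::ₘ y ::ₘ Multiset.replicate (x + y) 1 ∧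
      degMultiset G' = x ::ₘ y ::ₘ Multiset.replicate (x + y) 1 ∧
      ¬ Nonempty (G ≃g G') := by
  obtain ⟨m, rfl⟩ : ∃ m, x = m + 1 := ⟨x - 1, by omega⟩
  obtain ⟨n, rfl⟩ : ∃ n, y = n + 1 := ⟨y - 1, by omega⟩
  let F := doubleStar m n ⊕g finStar 1
  let F' := finStar (m + 1) ⊕g finStar (n + 1)
  let e := F.overFinIso (n := m + 1 + (n + 1) + 2) (by simp)
  let e' := F'.overFinIso (n := m + 1 + (n + 1) + 2) (by simp; omega)
  have tree := isTree_doubleStar m n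
  refine ⟨_, _, e.isAcyclic_iff.1 (isAcyclic_sum tree.isAcyclic (isTree_finStar 1).isAcyclic),
    e'.isAcyclic_iff.1 (isAcyclic_sum (isTree_finStar _).isAcyclic (isTree_finStar _).isAcyclic),
    ?_, ?_, ?_, ?_, ?_⟩
  · rw [← Nat.card_congr e.connectedComponentEquiv]
    exact card_connectedComponent_sum_of_connected tree.connected (isTree_finStar 1).connected
  · rw [← Nat.card_congr e'.connectedComponentEquiv]
    exact card_connectedComponent_sum_of_connected (isTree_finStar _).connected
      (isTree_finStar _).connected
  · rw [← degMultiset_congr e, degMultiset_doubleStar_sum_finStar_one]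
  · rw [← degMultiset_congr e', degMultiset_finStar_sum_finStar]
  · rintro ⟨f⟩
    exact not_nonempty_iso_finStar_sum_finStar (by omega) (by omega) ⟨(e.trans f).trans e'.symm⟩
end
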